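/- arXiv:2407.15536 — 4 statements merged into one kernel-verified Lean document; each statement's English description precedes it below -/
import Mathlib

section
/- Let u, ρ, σ, κ be real numbers and write i for the imaginary unit. Suppose d : ℝ → ℂ is differentiable at κ, satisfies d(x)² = (x − iρσu)² + σ²(iu + u²) for all x in a neighborhood of κ, d(κ) ≠ 0, and κ − iρσu + d(κ) ≠ 0. Define g(x) = (x − iρσu − d(x))/(x − iρσu + d(x)). Then g is differentiable at κ and its derivative at κ equals −2g(κ)/d(κ). -/
open Complex

/-! Differentiating `d ^ 2 = b ^ 2 + c` gives `d * d' = b * b'`. The numerator of the quotient rule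
for `g = (b - d) / (b + d)` then becomes, up to the factor `2 * b' / d`, the difference
`d ^ 2 - b ^ 2 = -(b - d) * (b + d)`, and one factor `b + d` cancels. Continuity of the
branch `d` already gives its differentiability where `d ≠ 0`: divide the slope of `d ^ 2` by
`d y + d x`, which tends to `2 * d x`. -/

section ContinuousBranch

open Topology

variable {𝕜 𝕜' : Type*} [NontriviallyNormedField 𝕜] [NontriviallyNormedField 𝕜']
  [NormedAlgebra 𝕜 𝕜'] {x : 𝕜}

lemma slope_eq_slope_sq_div_add {d : 𝕜 → 𝕜'} {y : 𝕜} (h : d y + d x ≠ 0) :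
    slope d x y = slope (fun z ↦ d z ^ 2) x y / (d y + d x) := by
  rw [eq_div_iff h]
  simp only [slope_def_module, smul_mul_assoc]
  ring_nf

lemma hasDerivAt_of_hasDerivAt_sq {d : 𝕜 → 𝕜'} {s' : 𝕜'} (two_ne : (2 : 𝕜') ≠ 0)
    (hd : ContinuousAt d x) (hne : d x ≠ 0) (hsq : HasDerivAt (fun y ↦ d y ^ 2) s' x) :
    HasDerivAt d (s' / (2 * d x)) x := by
  have sum_tendsto : Filter.Tendsto (fun y ↦ d y + d x) (𝓝 x) (𝓝 (2 * d x)) := by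
    simpa only [two_mul] using hd.tendsto.add_const (d x)
  have sum_ne : ∀ᶠ y in 𝓝 x, d y + d x ≠ 0 :=
    sum_tendsto.eventually_ne (mul_ne_zero two_ne hne)
  rw [hasDerivAt_iff_tendsto_slope] at hsq ⊢
  refine (hsq.div (sum_tendsto.mono_left nhdsWithin_le_nhds) (mul_ne_zero two_ne hne)).congr' ?_
  filter_upwards [nhdsWithin_le_nhds sum_ne] with y hy
  exact (slope_eq_slope_sq_div_add hy).symm

lemma hasDerivAt_of_sq_eq_sq_add_const {b d : 𝕜 → 𝕜'} {b' c : 𝕜'} (two_ne : (2 : 𝕜') ≠ 0)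
    (hb : HasDerivAt b b' x) (hd : ContinuousAt d x) (hne : d x ≠ 0)
    (hsq : ∀ᶠ y in 𝓝 x, d y ^ 2 = b y ^ 2 + c) :
    HasDerivAt d (b x * b' / d x) x := by
  have sq_deriv : HasDerivAt (fun y ↦ d y ^ 2) (2 * b x * b') x := by
    simpa using ((hb.fun_pow 2).add_const c).congr_of_eventuallyEq hsq
  refine (hasDerivAt_of_hasDerivAt_sq two_ne hd hne sq_deriv).congr_deriv ?_
  field_simp

lemma hasDerivAt_sub_div_add {b d : 𝕜 → 𝕜'} {b' d' : 𝕜'} (hb : HasDerivAt b b' x)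
    (hd : HasDerivAt d d' x) (hne : b x + d x ≠ 0) :
    HasDerivAt (fun y ↦ (b y - d y) / (b y + d y))
      (2 * (b' * d x - b x * d') / (b x + d x) ^ 2) x :=
  ((hb.fun_sub hd).fun_div (hb.fun_add hd) hne).congr_deriv (by ring)

theorem heston_deriv_g_kappa_general {b d : 𝕜 → 𝕜'} {b' c : 𝕜'} (two_ne : (2 : 𝕜') ≠ 0)
    (hb : HasDerivAt b b' x) (hd : ContinuousAt d x)
    (hsq : ∀ᶠ y in 𝓝 x, d y ^ 2 = b y ^ 2 + c) (hne : d x ≠ 0) (hne_add : b x + d x ≠ 0) :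
    HasDerivAt (fun y ↦ (b y - d y) / (b y + d y))
      (-2 * b' * ((b x - d x) / (b x + d x)) / d x) x := by
  have d_deriv := hasDerivAt_of_sq_eq_sq_add_const two_ne hb hd hne hsq
  refine (hasDerivAt_sub_div_add hb d_deriv hne_add).congr_deriv ?_
  field_simp
  ring

end ContinuousBranch

theorem heston_deriv_g_kappa (u ρ σ κ : ℝ) (d g : ℝ → ℂ)
    (hdiff : DifferentiableAt ℝ d κ)
    (hsq : ∀ᶠ x in nhds κ,
      d x ^ 2 = ((x : ℂ) - I * ρ * σ * u) ^ 2 + σ ^ 2 * (I * u + u ^ 2))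
    (hne : d κ ≠ 0)
    (hne2 : (κ : ℂ) - I * ρ * σ * u + d κ ≠ 0)
    (hg : ∀ x : ℝ, g x = ((x : ℂ) - I * ρ * σ * u - d x) / ((x : ℂ) - I * ρ * σ * u + d x)) :
    HasDerivAt g (-2 * g κ / d κ) κ := by
  obtain rfl := funext hg
  simpa only [ofRealCLM_apply, ofReal_one, mul_one] using
    heston_deriv_g_kappa_general two_ne_zero
      (ofRealCLM.hasDerivAt.sub_const (I * ρ * σ * u)) hdiff.continuousAt hsq hne hne2
end

section
/- Let u, κ, σ, ρ be real numbers with σ ≠ 0 and write i for the imaginary unit. Suppose d : ℝ → ℂ is differentiable at ρ, satisfies d(y)² = (κ − iyσu)² + σ²(iu + u²) for all y in a neighborhood of ρ, and d(ρ) ≠ 0. Define B(y) = (κ − iyσu − d(y))/σ². Then B is differentiable at ρ and its derivative at ρ equals iu(κ − iρσu − d(ρ))/(σ d(ρ)). -/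
open Complex

/-!
Write `a y = κ - iyσu`. Near `ρ`, `d` is a continuous square root of `a² + const`; since it does not
vanish at `ρ`, the factorization `d(y)² - d(ρ)² = (d(y) - d(ρ)) (d(y) + d(ρ))` makes it
differentiable with `d d' = a a'`. Hence `(a - d)' = -a' (a - d) / d`, where `a' = -iσu`.
-/

theorem hasDerivAt_algebraMap {𝕜 F : Type*} [NontriviallyNormedField 𝕜] [NormedRing F]
    [NormedAlgebra 𝕜 F] (x : 𝕜) : HasDerivAt (algebraMap 𝕜 F) 1 x :=
  (algebraMapCLM 𝕜 F).hasDerivAt.congr_deriv (map_one (algebraMap 𝕜 F))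

section SquareRoot

open Filter Topology

variable {𝕜 F : Type*} [NontriviallyNormedField 𝕜] [NormedField F] [NormedAlgebra 𝕜 F]
  [NeZero (2 : F)] {d f a : 𝕜 → F} {f' a' c : F} {x : 𝕜}

theorem hasDerivAt_of_sq_eventuallyEq (hd : ContinuousAt d x) (hf : HasDerivAt f f' x)
    (hsq : ∀ᶠ y in 𝓝 x, d y ^ 2 = f y) (hne : d x ≠ 0) :
    HasDerivAt d (f' / (2 * d x)) x := by
  have hsum : Tendsto (fun y ↦ d y + d x) (𝓝[≠] x) (𝓝 (2 * d x)) := by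
    rw [two_mul]
    exact (hd.tendsto.mono_left nhdsWithin_le_nhds).add_const (d x)
  have hlim : 2 * d x ≠ 0 := mul_ne_zero two_ne_zero hne
  rw [hasDerivAt_iff_tendsto_slope] at hf ⊢
  refine (hf.div hsum hlim).congr' ?_
  filter_upwards [hsum.eventually_ne hlim, hsq.filter_mono nhdsWithin_le_nhds] with y hy hsqy
  have hfactor : f y - f x = (d y - d x) * (d y + d x) := by
    rw [← hsqy, ← hsq.self_of_nhds]
    ring
  rw [Pi.div_apply, slope_def_module, slope_def_module, hfactor, ← smul_mul_assoc,
    mul_div_cancel_right₀ _ hy]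

theorem hasDerivAt_sub_of_sq_eventuallyEq_sq_add_const (hd : ContinuousAt d x)
    (ha : HasDerivAt a a' x) (hsq : ∀ᶠ y in 𝓝 x, d y ^ 2 = a y ^ 2 + c) (hne : d x ≠ 0) :
    HasDerivAt (fun y ↦ a y - d y) (-a' * (a x - d x) / d x) x := by
  have hradicand : HasDerivAt (fun y ↦ a y ^ 2 + c) (2 * a x * a') x := by
    simpa using (ha.fun_pow 2).add_const c
  have hderiv := hasDerivAt_of_sq_eventuallyEq hd hradicand hsq hne
  refine (ha.fun_sub hderiv).congr_deriv ?_
  have h2 : (2 : F) ≠ 0 := two_ne_zero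
  field_simp
  ring

end SquareRoot

theorem heston_deriv_B_rho_general {𝕜 : Type*} [NontriviallyNormedField 𝕜] [NormedAlgebra 𝕜 ℂ]
    {u κ σ : ℂ} {ρ : 𝕜} (hσ : σ ≠ 0) {d : 𝕜 → ℂ} (hd : ContinuousAt d ρ)
    (hsq : ∀ᶠ y in nhds ρ,
      d y ^ 2 = (κ - I * algebraMap 𝕜 ℂ y * σ * u) ^ 2 + σ ^ 2 * (I * u + u ^ 2))
    (hne : d ρ ≠ 0) :
    HasDerivAt (fun y ↦ (κ - I * algebraMap 𝕜 ℂ y * σ * u - d y) / σ ^ 2)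
      (I * u * (κ - I * algebraMap 𝕜 ℂ ρ * σ * u - d ρ) / (σ * d ρ)) ρ := by
  have ha : HasDerivAt (fun y ↦ κ - I * algebraMap 𝕜 ℂ y * σ * u) (-(I * σ * u)) ρ := by
    simpa using ((((hasDerivAt_algebraMap ρ).const_mul I).mul_const σ).mul_const u).const_sub κ
  have hsub := hasDerivAt_sub_of_sq_eventuallyEq_sq_add_const hd ha hsq hne
  refine (hsub.div_const (σ ^ 2)).congr_deriv ?_
  field_simp

theorem heston_deriv_B_rho (u κ σ ρ : ℝ) (hσ : σ ≠ 0) (d B : ℝ → ℂ)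
    (hdiff : DifferentiableAt ℝ d ρ)
    (hsq : ∀ᶠ y in nhds ρ,
      d y ^ 2 = ((κ : ℂ) - I * y * σ * u) ^ 2 + σ ^ 2 * (I * u + u ^ 2))
    (hne : d ρ ≠ 0)
    (hB : ∀ y : ℝ, B y = ((κ : ℂ) - I * y * σ * u - d y) / (σ : ℂ) ^ 2) :
    HasDerivAt B (I * u * ((κ : ℂ) - I * ρ * σ * u - d ρ) / ((σ : ℂ) * d ρ)) ρ := by
  rw [funext hB]
  exact heston_deriv_B_rho_general (ofReal_ne_zero.mpr hσ) hdiff.continuousAt hsq hne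
end

section
/- Let u, ρ, σ, κ, τ be real numbers with σ ≠ 0 and write i for the imaginary unit. Suppose d : ℝ → ℂ is differentiable at κ, satisfies d(x)² = (x − iρσu)² + σ²(iu + u²) for all x in a neighborhood of κ, with d(κ) ≠ 0 and κ − iρσu + d(κ) ≠ 0. Define g(x) = (x − iρσu − d(x))/(x − iρσu + d(x)), a(x) = exp(−τ d(x)), and D(x) = ((x − iρσu − d(x))/σ²)·(1 − a(x))/(1 − g(x)a(x)), and assume 1 − g(κ)a(κ) ≠ 0. Then D is differentiable at κ and, writing c = κ − iρσu and evaluating d, g, a at κ, its derivative at κ equals (c − d)·(τ a c (1 − g) − (1 − a)(1 + a g)) / (σ² d (1 − a g)²). -/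
open Complex

/-!
Write `c = κ - iρσu`, so that `d² - c²` does not depend on `κ`. Differentiating this relation gives
`d' = c c' / d`, and hence the logarithmic derivatives of the pieces of `D` are simple:
`-c' / d` for `c - d`, `-2 c' / d` for `g = (c - d) / (c + d)`, and `-τ c c' / d` for
`a = exp (-τ d)`. The rest is the quotient rule for `(1 - a) / (1 - g a)`.
-/

section

variable {𝕜 : Type*} [NontriviallyNormedField 𝕜] {x : 𝕜}

section NormedField

variable {F : Type*} [NormedField F] [NormedAlgebra 𝕜 F]

-- The slope of `f` is the slope of `f ^ 2` divided by `f y + f x`, which tends to `2 * f x`.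
theorem hasDerivAt_of_sq_eventuallyEq_s12 [NeZero (2 : F)] {f q : 𝕜 → F} {q' : F}
    (hf : ContinuousAt f x) (hq : HasDerivAt q q' x) (hsq : ∀ᶠ y in nhds x, f y ^ 2 = q y)
    (hfx : f x ≠ 0) : HasDerivAt f (q' / (2 * f x)) x := by
  have hsum : Filter.Tendsto (fun y ↦ f y + f x) (nhds x) (nhds (2 * f x)) := by
    simpa only [two_mul] using hf.tendsto.add_const (f x)
  have hsum_ne : 2 * f x ≠ 0 := mul_ne_zero two_ne_zero hfx
  rw [hasDerivAt_iff_tendsto_slope] at hq ⊢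
  refine (hq.div (hsum.mono_left nhdsWithin_le_nhds) hsum_ne).congr' ?_
  filter_upwards [nhdsWithin_le_nhds hsq, nhdsWithin_le_nhds (hsum.eventually_ne hsum_ne)]
    with y hy hy_ne
  have hdiff_sq : q y - q x = (f y - f x) * (f y + f x) := by
    rw [← hy, ← hsq.self_of_nhds]
    ring
  rw [Pi.div_apply, slope_def_module, slope_def_module, hdiff_sq, ← smul_mul_assoc,
    mul_div_cancel_right₀ _ hy_ne]

theorem hasDerivAt_of_sq_eventuallyEq_sq_add_const [NeZero (2 : F)] {c d : 𝕜 → F} {c' q : F}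
    (hc : HasDerivAt c c' x) (hd : ContinuousAt d x)
    (hsq : ∀ᶠ y in nhds x, d y ^ 2 = c y ^ 2 + q) (hdx : d x ≠ 0) :
    HasDerivAt d (c x * c' / d x) x := by
  refine (hasDerivAt_of_sq_eventuallyEq_s12 hd ((hc.fun_pow 2).add_const q) hsq hdx).congr_deriv ?_
  rw [Nat.cast_ofNat, pow_one, mul_assoc, mul_div_mul_left _ _ two_ne_zero]

theorem hasDerivAt_sub_of_hasDerivAt_mul_div {c d : 𝕜 → F} {c' : F} (hc : HasDerivAt c c' x)
    (hd : HasDerivAt d (c x * c' / d x) x) (hdx : d x ≠ 0) :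
    HasDerivAt (fun y ↦ c y - d y) (-(c' / d x) * (c x - d x)) x := by
  refine (hc.fun_sub hd).congr_deriv ?_
  field_simp
  ring

end NormedField

section Quotient

variable {F : Type*} [NontriviallyNormedField F] [NormedAlgebra 𝕜 F]

theorem hasDerivAt_sub_div_add_of_hasDerivAt_mul_div {c d : 𝕜 → F} {c' : F}
    (hc : HasDerivAt c c' x) (hd : HasDerivAt d (c x * c' / d x) x) (hdx : d x ≠ 0)
    (hadd : c x + d x ≠ 0) :
    HasDerivAt (fun y ↦ (c y - d y) / (c y + d y))
      (-(2 * c' / d x) * ((c x - d x) / (c x + d x))) x := by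
  refine ((hc.fun_sub hd).fun_div (hc.fun_add hd) hadd).congr_deriv ?_
  field_simp
  ring

theorem hasDerivAt_one_sub_div_one_sub_mul {a g : 𝕜 → F} {a' g' : F} (ha : HasDerivAt a a' x)
    (hg : HasDerivAt g g' x) (hne : 1 - g x * a x ≠ 0) :
    HasDerivAt (fun y ↦ (1 - a y) / (1 - g y * a y))
      (((1 - a x) * a x * g' - (1 - g x) * a') / (1 - g x * a x) ^ 2) x := by
  refine ((ha.const_sub 1).fun_div ((hg.fun_mul ha).const_sub 1) hne).congr_deriv ?_
  ring

end Quotient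

-- Since `c` is arbitrary, this also gives the derivative in `ρ`, with `c' = -iσu`.
theorem heston_deriv_D_kappa_general [NormedAlgebra 𝕜 ℂ]
    {c d g a D : 𝕜 → ℂ} {c' q σ τ : ℂ} (hσ : σ ≠ 0)
    (hc : HasDerivAt c c' x) (hd : ContinuousAt d x)
    (hsq : ∀ᶠ y in nhds x, d y ^ 2 = c y ^ 2 + q)
    (hdx : d x ≠ 0) (hadd : c x + d x ≠ 0)
    (hg : ∀ y, g y = (c y - d y) / (c y + d y))
    (ha : ∀ y, a y = exp (-(τ * d y)))
    (hD : ∀ y, D y = (c y - d y) / σ ^ 2 * ((1 - a y) / (1 - g y * a y)))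
    (hne : 1 - g x * a x ≠ 0) :
    HasDerivAt D
      (c' * ((c x - d x) * (τ * a x * c x * (1 - g x) - (1 - a x) * (1 + a x * g x)) /
        (σ ^ 2 * d x * (1 - a x * g x) ^ 2))) x := by
  have hd' : HasDerivAt d (c x * c' / d x) x :=
    hasDerivAt_of_sq_eventuallyEq_sq_add_const hc hd hsq hdx
  have hg' : HasDerivAt g (-(2 * c' / d x) * g x) x := by
    simpa only [← hg] using hasDerivAt_sub_div_add_of_hasDerivAt_mul_div hc hd' hdx hadd
  have ha' : HasDerivAt a (a x * -(τ * (c x * c' / d x))) x := by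
    simpa only [← ha] using (hd'.const_mul τ).fun_neg.cexp
  rw [funext hD]
  refine (((hasDerivAt_sub_of_hasDerivAt_mul_div hc hd' hdx).div_const (σ ^ 2)).fun_mul
    (hasDerivAt_one_sub_div_one_sub_mul ha' hg' hne)).congr_deriv ?_
  rw [mul_comm (a x) (g x)]
  field_simp
  ring

end

theorem heston_deriv_D_kappa (u ρ σ κ τ : ℝ) (hσ : σ ≠ 0) (d g a D : ℝ → ℂ)
    (hdiff : DifferentiableAt ℝ d κ)
    (hsq : ∀ᶠ x in nhds κ,
      d x ^ 2 = ((x : ℂ) - I * ρ * σ * u) ^ 2 + σ ^ 2 * (I * u + u ^ 2))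
    (hne : d κ ≠ 0)
    (hne2 : (κ : ℂ) - I * ρ * σ * u + d κ ≠ 0)
    (hg : ∀ x : ℝ, g x = ((x : ℂ) - I * ρ * σ * u - d x) / ((x : ℂ) - I * ρ * σ * u + d x))
    (ha : ∀ x : ℝ, a x = Complex.exp (-(τ * d x)))
    (hD : ∀ x : ℝ, D x = (((x : ℂ) - I * ρ * σ * u - d x) / (σ : ℂ) ^ 2) *
      ((1 - a x) / (1 - g x * a x)))
    (hne3 : 1 - g κ * a κ ≠ 0) :
    HasDerivAt D
      ((((κ : ℂ) - I * ρ * σ * u) - d κ) *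
          (τ * a κ * ((κ : ℂ) - I * ρ * σ * u) * (1 - g κ) - (1 - a κ) * (1 + a κ * g κ)) /
        ((σ : ℂ) ^ 2 * d κ * (1 - a κ * g κ) ^ 2)) κ := by
  have hc : HasDerivAt (fun x : ℝ ↦ (x : ℂ) - I * ρ * σ * u) 1 κ :=
    (hasDerivAt_id κ).ofReal_comp.sub_const _
  simpa only [one_mul] using heston_deriv_D_kappa_general (ofReal_ne_zero.mpr hσ)
    hc hdiff.continuousAt hsq hne hne2 hg ha hD hne3
end

section
/- Let u, κ, σ, ρ, τ be real numbers with σ ≠ 0 and write i for the imaginary unit. Suppose d : ℝ → ℂ is differentiable at ρ, satisfies d(y)² = (κ − iyσu)² + σ²(iu + u²) for all y in a neighborhood of ρ, with d(ρ) ≠ 0 and κ − iρσu + d(ρ) ≠ 0. Define g(y) = (κ − iyσu − d(y))/(κ − iyσu + d(y)), a(y) = exp(−τ d(y)), and D(y) = ((κ − iyσu − d(y))/σ²)·(1 − a(y))/(1 − g(y)a(y)), and assume 1 − g(ρ)a(ρ) ≠ 0. Then D is differentiable at ρ and, writing c = κ − iρσu and evaluating d, g, a at ρ, its derivative at ρ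 equals iu(c − d)·((1 + a g)(1 − a) − τ a (1 − g) c) / (σ d (1 − a g)²). -/
open Complex

/-!
Write `c = κ - iρσu`. Since `d² - c²` does not depend on `ρ`, the pair `(c, d)` moves along a
hyperbola: `c' = q d` and `d' = q c` with `q = c' / d`. In the null coordinates this motion is
diagonal, `(c ± d)' = ±q (c ± d)`, so `g = (c - d) / (c + d)` satisfies `g' = -2 q g`, while
`a = exp (-τ d)` satisfies `a' = -τ q c a`. The quotient rule for `(c - d) (1 - a) / (1 - g a)`
then involves only `q` and undifferentiated quantities.
-/

section

variable {𝕜 𝕜' : Type*} [NontriviallyNormedField 𝕜] [NontriviallyNormedField 𝕜']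
  [NormedAlgebra 𝕜 𝕜'] {x : 𝕜}

theorem hasDerivAt_of_hasDerivAt_sq_s13 [NeZero (2 : 𝕜')] {f : 𝕜 → 𝕜'} {s : 𝕜'}
    (hsq : HasDerivAt (fun y => f y ^ 2) s x) (hf : ContinuousAt f x) (hfx : f x ≠ 0) :
    HasDerivAt f (s / (2 * f x)) x := by
  rw [hasDerivAt_iff_tendsto_slope] at hsq ⊢
  have hsum : Filter.Tendsto (fun y => f y + f x) (nhdsWithin x {x}ᶜ) (nhds (2 * f x)) := by
    simpa only [two_mul] using (hf.tendsto.mono_left nhdsWithin_le_nhds).add_const (f x)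
  have hne : 2 * f x ≠ 0 := mul_ne_zero two_ne_zero hfx
  refine (hsq.div hsum hne).congr' ?_
  filter_upwards [hsum.eventually_ne hne] with y hy
  calc slope (fun y => f y ^ 2) x y / (f y + f x)
      = (f y + f x) * slope f x y / (f y + f x) := by
        simp only [slope_def_module, mul_smul_comm, sq_sub_sq]
    _ = slope f x y := mul_div_cancel_left₀ _ hy

theorem hasDerivAt_of_sq_eq_sq_add_const_s13 [NeZero (2 : 𝕜')] {c d : 𝕜 → 𝕜'} {k q : 𝕜'}
    (hc : HasDerivAt c (q * d x) x) (hd : ContinuousAt d x)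
    (hsq : ∀ᶠ y in nhds x, d y ^ 2 = c y ^ 2 + k) (hdx : d x ≠ 0) :
    HasDerivAt d (q * c x) x := by
  have hd_sq : HasDerivAt (fun y => d y ^ 2) (2 * c x * (q * d x)) x := by
    simpa using ((hc.fun_pow 2).add_const k).congr_of_eventuallyEq hsq
  refine (hasDerivAt_of_hasDerivAt_sq_s13 hd_sq hd hdx).congr_deriv ?_
  field_simp

theorem hasDerivAt_sub_of_hyperbolic {c d : 𝕜 → 𝕜'} {q : 𝕜'}
    (hc : HasDerivAt c (q * d x) x) (hd : HasDerivAt d (q * c x) x) :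
    HasDerivAt (fun y => c y - d y) (-q * (c x - d x)) x :=
  (hc.fun_sub hd).congr_deriv (by ring)

theorem hasDerivAt_add_of_hyperbolic {c d : 𝕜 → 𝕜'} {q : 𝕜'}
    (hc : HasDerivAt c (q * d x) x) (hd : HasDerivAt d (q * c x) x) :
    HasDerivAt (fun y => c y + d y) (q * (c x + d x)) x :=
  (hc.fun_add hd).congr_deriv (by ring)

theorem hasDerivAt_sub_div_add_of_hyperbolic {c d : 𝕜 → 𝕜'} {q : 𝕜'}
    (hc : HasDerivAt c (q * d x) x) (hd : HasDerivAt d (q * c x) x) (hne : c x + d x ≠ 0) :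
    HasDerivAt (fun y => (c y - d y) / (c y + d y))
      (-2 * q * ((c x - d x) / (c x + d x))) x := by
  refine ((hasDerivAt_sub_of_hyperbolic hc hd).fun_div
    (hasDerivAt_add_of_hyperbolic hc hd) hne).congr_deriv ?_
  field_simp
  ring

theorem hasDerivAt_mul_one_sub_div_one_sub_mul {p g a : 𝕜 → 𝕜'} {q a' : 𝕜'}
    (hp : HasDerivAt p (-q * p x) x) (hg : HasDerivAt g (-2 * q * g x) x)
    (ha : HasDerivAt a a' x) (hne : 1 - g x * a x ≠ 0) :
    HasDerivAt (fun y => p y * ((1 - a y) / (1 - g y * a y)))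
      (-p x * (q * (1 + g x * a x) * (1 - a x) + (1 - g x) * a') / (1 - g x * a x) ^ 2) x := by
  refine (hp.fun_mul ((ha.const_sub 1).fun_div
    ((hg.fun_mul ha).const_sub 1) hne)).congr_deriv ?_
  field_simp
  ring

end

theorem heston_deriv_D_rho_general (u κ σ τ : ℂ) (ρ : ℝ) (hσ : σ ≠ 0) (d g a D : ℝ → ℂ)
    (hcont : ContinuousAt d ρ)
    (hsq : ∀ᶠ y : ℝ in nhds ρ, d y ^ 2 = (κ - I * y * σ * u) ^ 2 + σ ^ 2 * (I * u + u ^ 2))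
    (hne : d ρ ≠ 0)
    (hne2 : κ - I * ρ * σ * u + d ρ ≠ 0)
    (hg : ∀ y : ℝ, g y = (κ - I * y * σ * u - d y) / (κ - I * y * σ * u + d y))
    (ha : ∀ y : ℝ, a y = exp (-(τ * d y)))
    (hD : ∀ y : ℝ, D y = ((κ - I * y * σ * u - d y) / σ ^ 2) * ((1 - a y) / (1 - g y * a y)))
    (hne3 : 1 - g ρ * a ρ ≠ 0) :
    HasDerivAt D
      (I * u * ((κ - I * ρ * σ * u) - d ρ) *
          ((1 + a ρ * g ρ) * (1 - a ρ) - τ * a ρ * (1 - g ρ) * (κ - I * ρ * σ * u)) /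
        (σ * d ρ * (1 - a ρ * g ρ) ^ 2)) ρ := by
  let c : ℝ → ℂ := fun y => κ - I * y * σ * u
  let q : ℂ := -(I * σ * u) / d ρ
  have hc : HasDerivAt c (q * d ρ) ρ := by
    refine ((((ofRealCLM.hasDerivAt (x := ρ)).const_mul I).mul_const σ).mul_const u
      |>.const_sub κ).congr_deriv ?_
    simp [q, hne]
  have hd : HasDerivAt d (q * c ρ) ρ := hasDerivAt_of_sq_eq_sq_add_const_s13 hc hcont hsq hne
  have hg' : HasDerivAt g (-2 * q * g ρ) ρ := by
    simpa only [← hg, c, ← funext hg] using hasDerivAt_sub_div_add_of_hyperbolic hc hd hne2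
  have ha' : HasDerivAt a (a ρ * -(τ * (q * c ρ))) ρ := by
    simpa only [← ha, ← funext ha] using (hd.const_mul τ).fun_neg.cexp
  have hp : HasDerivAt (fun y => (c y - d y) / σ ^ 2) (-q * ((c ρ - d ρ) / σ ^ 2)) ρ :=
    ((hasDerivAt_sub_of_hyperbolic hc hd).div_const _).congr_deriv (mul_div_assoc _ _ _)
  rw [funext hD]
  refine (hasDerivAt_mul_one_sub_div_one_sub_mul hp hg' ha' hne3).congr_deriv ?_
  simp only [c, q, mul_comm (g ρ)] at hne3 ⊢
  field_simp
  ring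

theorem heston_deriv_D_rho (u κ σ ρ τ : ℝ) (hσ : σ ≠ 0) (d g a D : ℝ → ℂ)
    (hdiff : DifferentiableAt ℝ d ρ)
    (hsq : ∀ᶠ y in nhds ρ,
      d y ^ 2 = ((κ : ℂ) - I * y * σ * u) ^ 2 + σ ^ 2 * (I * u + u ^ 2))
    (hne : d ρ ≠ 0)
    (hne2 : (κ : ℂ) - I * ρ * σ * u + d ρ ≠ 0)
    (hg : ∀ y : ℝ, g y = ((κ : ℂ) - I * y * σ * u - d y) / ((κ : ℂ) - I * y * σ * u + d y))
    (ha : ∀ y : ℝ, a y = Complex.exp (-(τ * d y)))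
    (hD : ∀ y : ℝ, D y = (((κ : ℂ) - I * y * σ * u - d y) / (σ : ℂ) ^ 2) *
      ((1 - a y) / (1 - g y * a y)))
    (hne3 : 1 - g ρ * a ρ ≠ 0) :
    HasDerivAt D
      (I * u * (((κ : ℂ) - I * ρ * σ * u) - d ρ) *
          ((1 + a ρ * g ρ) * (1 - a ρ) - τ * a ρ * (1 - g ρ) * ((κ : ℂ) - I * ρ * σ * u)) /
        ((σ : ℂ) * d ρ * (1 - a ρ * g ρ) ^ 2)) ρ :=
  heston_deriv_D_rho_general u κ σ τ ρ (ofReal_ne_zero.2 hσ) d g a D hdiff.continuousAt hsq hne hne2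
    hg ha hD hne3
end
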